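/- Let Λ = max{‖V‖, ‖T‖, ‖T⁻¹‖}, and let C₀ = (1/2)[(E−V)T⁻¹ − i(T* − T⁻¹)] and D₀ = (1/2)[(E−V)T⁻¹ + i(T* + T⁻¹)] be the lower-left and lower-right blocks of C M^E C*. Then D₀ is invertible and ‖D₀⁻¹C₀‖² ≤ 1 − 4Λ⁻²(|E| + Λ + 2)⁻². -/

import Mathlib

open ContinuousLinearMap

noncomputable section

variable {H : Type*} [NormedAddCommGroup H] [InnerProductSpace ℂ H] [CompleteSpace H]

theorem aux_unit (D C B : H →L[ℂ] H) (h1 : D * star D = 1 + C * star C)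
    (h2 : star D * D = 1 + star B * B) : IsUnit D := by
  have u1 : IsUnit (D * star D) := by
    rw [h1]
    refine CStarAlgebra.isUnit_of_le (1 : H →L[ℂ] H) ?_ isStrictlyPositive_one
    exact le_add_of_nonneg_right (mul_star_self_nonneg C)
  have u2 : IsUnit (star D * D) := by
    rw [h2]
    refine CStarAlgebra.isUnit_of_le (1 : H →L[ℂ] H) ?_ isStrictlyPositive_one
    exact le_add_of_nonneg_right (star_mul_self_nonneg B)
  obtain ⟨a, ha⟩ := u1.exists_right_inv
  obtain ⟨b, hb⟩ := u2.exists_left_inv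
  rw [isUnit_iff_exists_and_exists]
  exact ⟨⟨star D * a, by rw [← mul_assoc, ha]⟩, ⟨b * star D, by rw [mul_assoc, hb]⟩⟩

theorem aux_bound (D C X : H →L[ℂ] H) (r : ℝ) (hns : ¬ Subsingleton H) (h1 : D * star D = 1 + C * star C)
    (hX : X * D = 1) (hX2 : D * X = 1) (hr : 0 ≤ r) (hD : ‖D‖ ≤ r) :
    ‖X * C‖ ^ 2 ≤ 1 - (r ^ 2)⁻¹ := by
  rcases subsingleton_or_nontrivial H with hs | hn
  · exact absurd hs hns
  have hF : X * star X = 1 - (X * C) * star (X * C) := by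
    have hs : star D * star X = 1 := by rw [← star_mul, hX, star_one]
    have e : X * (D * star D) * star X = 1 := by
      rw [← mul_assoc X, hX, one_mul, hs]
    rw [h1] at e
    rw [star_mul, ← e]
    noncomm_ring
  have key : ∀ x : H, ‖star (X * C) x‖ ^ 2 = ‖x‖ ^ 2 - ‖star X x‖ ^ 2 := by
    intro x
    have n (G : H →L[ℂ] H) : ((‖star G x‖ ^ 2 : ℝ) : ℂ) = inner ℂ x ((G * star G) x) := by
      rw [mul_apply_eq_comp, star_eq_adjoint, ← ContinuousLinearMap.adjoint_inner_left,
        inner_self_eq_norm_sq_to_K]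
      simp
    have h3 := n X
    rw [hF, sub_apply, inner_sub_right, ← n (X * C),
      one_apply_eq_self, inner_self_eq_norm_sq_to_K] at h3
    have h4 : ‖star X x‖ ^ 2 = ‖x‖ ^ 2 - ‖star (X * C) x‖ ^ 2 := by
      apply Complex.ofReal_injective
      rw [h3]; push_cast; rfl
    linarith
  have low : ∀ x : H, ‖x‖ ≤ r * ‖star X x‖ := by
    intro x
    have hs : star D * star X = 1 := by rw [← star_mul, hX, star_one]
    calc ‖x‖ = ‖star D (star X x)‖ := by
          rw [← mul_apply_eq_comp, hs, one_apply_eq_self]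
      _ ≤ ‖star D‖ * ‖star X x‖ := le_opNorm _ _
      _ ≤ r * ‖star X x‖ := by rw [norm_star]; gcongr
  have hr0 : 0 < r := by
    rcases hr.lt_or_eq with h | h
    · exact h
    · obtain ⟨x, hx⟩ := exists_ne (0 : H)
      have := low x
      rw [← h, zero_mul] at this
      exact absurd (norm_le_zero_iff.mp this) hx
  have key2 : ∀ x : H, ‖star (X * C) x‖ ^ 2 ≤ (1 - (r ^ 2)⁻¹) * ‖x‖ ^ 2 := by
    intro x
    have h5 : ‖x‖ ^ 2 ≤ r ^ 2 * ‖star X x‖ ^ 2 := by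
      rw [← mul_pow]; exact pow_le_pow_left₀ (norm_nonneg _) (low x) 2
    have h6 : (r ^ 2)⁻¹ * ‖x‖ ^ 2 ≤ ‖star X x‖ ^ 2 := by
      rw [inv_mul_le_iff₀ (by positivity)]; exact h5
    rw [key]; linarith
  have hk : 0 ≤ 1 - (r ^ 2)⁻¹ := by
    obtain ⟨x, hx⟩ := exists_ne (0 : H)
    have hx' : 0 < ‖x‖ ^ 2 := by have := norm_pos_iff.mpr hx; positivity
    exact nonneg_of_mul_nonneg_left ((sq_nonneg _).trans (key2 x)) hx'
  rw [← norm_star]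
  have : ‖star (X * C)‖ ≤ √(1 - (r ^ 2)⁻¹) := by
    refine opNorm_le_bound _ (Real.sqrt_nonneg _) fun x => ?_
    refine abs_le_of_sq_le_sq' ?_ (by positivity) |>.2
    rw [mul_pow, Real.sq_sqrt hk]; exact key2 x
  calc _ ≤ √(1 - (r ^ 2)⁻¹) ^ 2 := pow_le_pow_left₀ (norm_nonneg _) this 2
    _ = _ := Real.sq_sqrt hk

theorem aux_alg (A T S : H →L[ℂ] H) (h : A * T = star T * star A) (h' : star A * S = star S * A)
    (hT : T * S = 1) (hT' : S * T = 1) (D C B : H →L[ℂ] H)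
    (hD : D = (2 : ℂ)⁻¹ • (A + Complex.I • (star T + S)))
    (hC : C = (2 : ℂ)⁻¹ • (A - Complex.I • (star T - S)))
    (hB : B = (2 : ℂ)⁻¹ • (A + Complex.I • (star T - S))) :
    D * star D = 1 + C * star C ∧ star D * D = 1 + star B * B := by
  have k1 : star S * star T = 1 := by rw [← star_mul, hT, star_one]
  have k2 : star T * star S = 1 := by rw [← star_mul, hT', star_one]
  have c2 : star ((2 : ℂ)⁻¹) = (2 : ℂ)⁻¹ := by simp [Complex.ext_iff]
  have cI : star Complex.I = -Complex.I := by simp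
  subst hD hC hB
  constructor <;>
  · simp only [star_smul, star_add, star_sub, star_star, mul_add, add_mul, mul_sub, sub_mul,
      smul_mul_assoc, mul_smul_comm, smul_add, smul_sub, smul_smul, h, h', hT, hT', k1, k2,
      c2, cI]
    match_scalars <;> ring_nf <;> simp <;> norm_num <;>
      first | ring1 | linear_combination (-1 : ℂ) * Complex.I_mul_I

/-- Let `Λ = max{‖V‖, ‖T‖, ‖T⁻¹‖}`, and let `C₀ = (1/2)[(E−V)T⁻¹ − i(T* − T⁻¹)]` and
`D₀ = (1/2)[(E−V)T⁻¹ + i(T* + T⁻¹)]` be the lower-left and lower-right blocks of the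
Cayley conjugate `C M^E C*` of the transfer operator.  Then `D₀` is invertible and
`‖D₀⁻¹C₀‖² ≤ 1 − 4Λ⁻²(|E| + Λ + 2)⁻²`. -/
theorem cayley_conj_transferOp_block_bound (E : ℝ) (V T Tinv : H →L[ℂ] H)
    (hV : IsSelfAdjoint V) (hT : T ∘L Tinv = 1) (hT' : Tinv ∘L T = 1) :
    ∃ Dinv : H →L[ℂ] H,
      ((2 : ℂ)⁻¹ • (((((E : ℂ) • (1 : H →L[ℂ] H)) - V) ∘L Tinv) +
          Complex.I • (adjoint T + Tinv))) ∘L Dinv = 1 ∧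
      Dinv ∘L ((2 : ℂ)⁻¹ • (((((E : ℂ) • (1 : H →L[ℂ] H)) - V) ∘L Tinv) +
          Complex.I • (adjoint T + Tinv))) = 1 ∧
      ‖Dinv ∘L ((2 : ℂ)⁻¹ • (((((E : ℂ) • (1 : H →L[ℂ] H)) - V) ∘L Tinv) -
          Complex.I • (adjoint T - Tinv)))‖ ^ 2 ≤
        1 - 4 * ((max (max ‖V‖ ‖T‖) ‖Tinv‖) ^ 2)⁻¹ *
          ((|E| + max (max ‖V‖ ‖T‖) ‖Tinv‖ + 2) ^ 2)⁻¹ := by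
  set A : H →L[ℂ] H := (((E : ℂ) • (1 : H →L[ℂ] H)) - V) ∘L Tinv with hA
  set L := max (max ‖V‖ ‖T‖) ‖Tinv‖ with hL
  have hW : star (((E : ℂ) • (1 : H →L[ℂ] H)) - V) = ((E : ℂ) • (1 : H →L[ℂ] H)) - V := by
    rw [star_sub, hV.star_eq, star_smul, star_one]; simp
  have hA' : A = (((E : ℂ) • (1 : H →L[ℂ] H)) - V) * Tinv := rfl
  change T * Tinv = 1 at hT
  change Tinv * T = 1 at hT'
  have k2 : star T * star Tinv = 1 := by rw [← star_mul, hT', star_one]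
  have a1 : A * T = star T * star A := by
    rw [hA', star_mul, hW, mul_assoc, hT', ← mul_assoc, k2, mul_one, one_mul]
  have a2 : star A * Tinv = star Tinv * A := by
    rw [hA', star_mul, hW, mul_assoc]
  rw [← star_eq_adjoint]
  set D : H →L[ℂ] H := (2 : ℂ)⁻¹ • (A + Complex.I • (star T + Tinv)) with hD
  set C : H →L[ℂ] H := (2 : ℂ)⁻¹ • (A - Complex.I • (star T - Tinv)) with hC
  obtain ⟨h1, h2⟩ := aux_alg A T Tinv a1 a2 hT hT' D C _ hD hC rfl
  have hu := aux_unit D C _ h1 h2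
  obtain ⟨u, hu⟩ := hu
  have e1 : D * (↑u⁻¹ : H →L[ℂ] H) = 1 := by rw [← hu]; simp
  have e2 : (↑u⁻¹ : H →L[ℂ] H) * D = 1 := by rw [← hu]; simp
  refine ⟨(↑u⁻¹ : H →L[ℂ] H), e1, e2, ?_⟩
  have lV : ‖V‖ ≤ L := (le_max_left _ _).trans (le_max_left _ _)
  have lT : ‖T‖ ≤ L := (le_max_right _ _).trans (le_max_left _ _)
  have lS : ‖Tinv‖ ≤ L := le_max_right _ _
  have L0 : 0 ≤ L := (norm_nonneg _).trans lV
  have nA : ‖A‖ ≤ (|E| + L) * L := by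
    have h3 : ‖((E : ℂ) • (1 : H →L[ℂ] H)) - V‖ ≤ |E| + L := by
      refine (norm_sub_le _ _).trans (add_le_add ?_ lV)
      rw [norm_smul, Complex.norm_real, Real.norm_eq_abs]
      exact mul_le_of_le_one_right (abs_nonneg _) norm_id_le
    exact (opNorm_comp_le _ _).trans (by gcongr)
  have nD : ‖D‖ ≤ L * (|E| + L + 2) / 2 := by
    have h4 : ‖A + Complex.I • (star T + Tinv)‖ ≤ (|E| + L) * L + (L + L) := by
      refine (norm_add_le _ _).trans (add_le_add nA ?_)
      rw [norm_smul, Complex.norm_I, one_mul]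
      exact (norm_add_le _ _).trans (add_le_add (by rwa [norm_star]) lS)
    rw [hD, norm_smul, norm_inv, Complex.norm_ofNat]
    linarith
  by_cases hns : Subsingleton H
  · have z : ∀ G : H →L[ℂ] H, ‖G‖ = 0 := fun G => by
      rw [show G = 0 from ContinuousLinearMap.ext fun x => Subsingleton.elim _ _, norm_zero]
    have hL0 : L = 0 := by rw [hL, z, z, z]; simp
    rw [z, hL0]; norm_num
  have := aux_bound D C _ _ hns h1 e2 e1 (by positivity) nD
  refine this.trans (le_of_eq ?_)
  rw [div_pow, mul_pow, inv_div, div_eq_mul_inv, mul_inv]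
  ring
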